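/- arXiv:1703.04243 — 3 statements merged into one kernel-verified Lean document; each statement's English description precedes it below -/
import Mathlib

section
/- Let α, β > −1 and n ≥ 0 be an integer. For ρ ≥ 1 and any complex number u with |u| = ρ, writing z = (u + u⁻¹)/2 (so that z lies on the Bernstein ellipse E_ρ), the Jacobi polynomial satisfies P_n^{(α,β)}(z) = Σ_{k=−n}^{n} d_{|k|,n} u^k, where d_{k,n} are the Chebyshev-connection coefficients defined in terms of a terminating ₃F₂ sum. -/
open Finset

/-- Pochhammer symbol `(a)_j = a (a+1) ⋯ (a+j-1)`. -/
noncomputable def poch (a : ℝ) (j : ℕ) : ℝ := ∏ i ∈ Finset.range j, (a + i)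

/-- Generalized binomial coefficient `binom(a, m) = a (a-1) ⋯ (a-m+1) / m!`. -/
noncomputable def gbinom (a : ℝ) (m : ℕ) : ℝ :=
  (∏ i ∈ Finset.range m, (a - i)) / (Nat.factorial m)

/-- Jacobi polynomial `P_n^{(α,β)}(x)` of a real variable. -/
noncomputable def jacobiP (α β : ℝ) (n : ℕ) (x : ℝ) : ℝ :=
  (1 / 2 ^ n) * ∑ k ∈ Finset.range (n + 1),
    gbinom ((n : ℝ) + α) (n - k) * gbinom ((n : ℝ) + β) k * (x - 1) ^ k * (x + 1) ^ (n - k)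

/-- Jacobi polynomial `P_n^{(α,β)}(z)` of a complex variable. -/
noncomputable def jacobiC (α β : ℝ) (n : ℕ) (z : ℂ) : ℂ :=
  (1 / 2 ^ n) * ∑ k ∈ Finset.range (n + 1),
    ((gbinom ((n : ℝ) + α) (n - k) * gbinom ((n : ℝ) + β) k : ℝ) : ℂ) *
      (z - 1) ^ k * (z + 1) ^ (n - k)

/-- Chebyshev-connection coefficients `d_{k,n}`, given by a terminating ₃F₂ sum. -/
noncomputable def dCoeff (α β : ℝ) (n k : ℕ) : ℝ :=
  (poch ((n : ℝ) + α + β + 1) k * poch ((k : ℝ) + α + 1) (n - k)) /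
      ((Nat.factorial (n - k)) * 2 ^ (2 * k) * (Nat.factorial k)) *
    ∑ j ∈ Finset.range (n - k + 1),
      (poch ((k : ℝ) - n) j * poch ((n : ℝ) + k + α + β + 1) j * poch ((k : ℝ) + 1 / 2) j) /
        (poch ((k : ℝ) + α + 1) j * poch (2 * (k : ℝ) + 1) j * (Nat.factorial j))

/-- The Bernstein ellipse `E_ρ`: the set of points `z = (u + u⁻¹)/2` with `|u| = ρ`. -/
def bernsteinEllipse (ρ : ℝ) : Set ℂ :=
  {z : ℂ | ∃ u : ℂ, ‖u‖ = ρ ∧ z = (u + u⁻¹) / 2}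

lemma poch_add (a : ℝ) (i j : ℕ) : poch a (i + j) = poch a i * poch (a + i) j := by
  unfold poch
  rw [Finset.prod_range_add]
  congr 1
  apply Finset.prod_congr rfl
  intro x _
  push_cast; ring

lemma poch_succ (a : ℝ) (j : ℕ) : poch a (j+1) = poch a j * (a + j) := by
  unfold poch
  rw [Finset.prod_range_succ]

lemma poch_zero (a : ℝ) : poch a 0 = 1 := by simp [poch]

lemma poch_pos (a : ℝ) (ha : 0 < a) (j : ℕ) : 0 < poch a j := by
  unfold poch
  apply Finset.prod_pos
  intro i _
  positivity

/-- falling factorial as rising factorial -/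
lemma falling_eq_poch (a : ℝ) (m : ℕ) :
    ∏ i ∈ Finset.range m, (a - i) = poch (a - m + 1) m := by
  unfold poch
  rw [← Finset.prod_range_reflect]
  apply Finset.prod_congr rfl
  intro i hi
  have hi := Finset.mem_range.mp hi
  rw [Nat.cast_sub (by omega), Nat.cast_sub (by omega)]
  push_cast; ring

lemma gbinom_eq_poch (a : ℝ) (m : ℕ) :
    gbinom a m = poch (a - m + 1) m / (Nat.factorial m) := by
  rw [gbinom, falling_eq_poch]

lemma gbinom_eq_choose (a : ℝ) (m : ℕ) : gbinom a m = Ring.choose a m := by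
  have h := Ring.descPochhammer_eq_factorial_smul_choose a m
  rw [Polynomial.descPochhammer_smeval_eq_ascPochhammer] at h
  have h3 : ((ascPochhammer ℕ m).smeval (a - m + 1) : ℝ) = poch (a - m + 1) m := by
    clear h
    generalize a - (m:ℝ) + 1 = b
    rw [Polynomial.ascPochhammer_smeval_eq_eval]
    induction m with
    | zero => simp [poch]
    | succ m ih => rw [ascPochhammer_succ_eval, ih, poch_succ]
  rw [gbinom_eq_poch, ← h3, h]
  have : (Nat.factorial m : ℝ) ≠ 0 := by positivity
  field_simp
  simp

lemma vandermonde (a b : ℝ) (m : ℕ) :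
    ∑ k ∈ Finset.range (m + 1), gbinom a (m - k) * gbinom b k = gbinom (a + b) m := by
  simp only [gbinom_eq_choose]
  rw [add_comm a b, Ring.add_choose_eq m (Commute.all b a),
    Finset.Nat.sum_antidiagonal_eq_sum_range_succ_mk]
  apply Finset.sum_congr rfl
  intro k _
  ring

/-- power coefficients of the Jacobi polynomial at `1` -/
noncomputable def cCoeff (α β : ℝ) (n m : ℕ) : ℝ :=
  poch ((n : ℝ) + α + β + 1) m * poch ((m : ℝ) + α + 1) (n - m) /
    ((Nat.factorial m) * (Nat.factorial (n - m)))

lemma gbinom_mul_choose (α : ℝ) (n m k : ℕ) (hm : m ≤ n) (hk : k ≤ m) :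
    gbinom ((n : ℝ) + α) (n - k) * ((n - k).choose (m - k) : ℝ) =
      gbinom ((n : ℝ) + α) (n - m) * gbinom ((m : ℝ) + α) (m - k) := by
  obtain ⟨a, rfl⟩ := Nat.exists_eq_add_of_le hk
  obtain ⟨b, rfl⟩ := Nat.exists_eq_add_of_le hm
  have e1 : k + a + b - k = a + b := by omega
  have e2 : k + a - k = a := by omega
  have e3 : k + a + b - (k + a) = b := by omega
  rw [e1, e2, e3, gbinom_eq_poch, gbinom_eq_poch, gbinom_eq_poch, poch_add,
    Nat.cast_add_choose]
  have h1 : (Nat.factorial (a + b) : ℝ) ≠ 0 := by positivity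
  have h2 : (Nat.factorial a : ℝ) ≠ 0 := by positivity
  have h3 : (Nat.factorial b : ℝ) ≠ 0 := by positivity
  have f1 : ((k + a + b : ℕ) : ℝ) + α - ((a + b : ℕ) : ℝ) + 1 = k + α + 1 := by push_cast; ring
  have f2 : ((k + a + b : ℕ) : ℝ) + α - (b : ℝ) + 1 = k + α + 1 + a := by push_cast; ring
  have f3 : ((k + a : ℕ) : ℝ) + α - (a : ℝ) + 1 = k + α + 1 := by push_cast; ring
  rw [f1, f2, f3]
  field_simp

lemma sum_gbinom (α β : ℝ) (n m : ℕ) (hm : m ≤ n) :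
    ∑ k ∈ Finset.range (m + 1), gbinom ((n : ℝ) + α) (n - k) * gbinom ((n : ℝ) + β) k *
      ((n - k).choose (m - k) : ℝ) = cCoeff α β n m := by
  have : ∀ k ∈ Finset.range (m + 1), gbinom ((n : ℝ) + α) (n - k) * gbinom ((n : ℝ) + β) k *
      ((n - k).choose (m - k) : ℝ) = gbinom ((n : ℝ) + α) (n - m) *
        (gbinom ((m : ℝ) + α) (m - k) * gbinom ((n : ℝ) + β) k) := by
    intro k hk
    have hk := Finset.mem_range.mp hk
    rw [← mul_assoc, ← gbinom_mul_choose α n m k hm (by omega)]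
    ring
  rw [Finset.sum_congr rfl this, ← Finset.mul_sum, vandermonde, gbinom_eq_poch, gbinom_eq_poch,
    cCoeff]
  have f1 : (n : ℝ) + α - ((n - m : ℕ) : ℝ) + 1 = m + α + 1 := by
    rw [Nat.cast_sub hm]; ring
  have f2 : (m : ℝ) + α + (n + β) - m + 1 = n + α + β + 1 := by ring
  rw [f1, f2]
  have h2 : (Nat.factorial m : ℝ) ≠ 0 := by positivity
  have h3 : (Nat.factorial (n - m) : ℝ) ≠ 0 := by positivity
  field_simp

lemma jacobiC_eq (α β : ℝ) (n : ℕ) (z : ℂ) :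
    jacobiC α β n z = ∑ m ∈ Finset.range (n + 1), (cCoeff α β n m : ℂ) * ((z - 1) / 2) ^ m := by
  have key : ∀ k ∈ Finset.range (n + 1),
      (1 / 2 ^ n : ℂ) * (((gbinom ((n : ℝ) + α) (n - k) * gbinom ((n : ℝ) + β) k : ℝ) : ℂ) *
      (z - 1) ^ k * (z + 1) ^ (n - k)) =
      ∑ m ∈ Finset.range (n + 1), if k ≤ m then
        ((gbinom ((n : ℝ) + α) (n - k) * gbinom ((n : ℝ) + β) k *
      ((n - k).choose (m - k) : ℝ) : ℝ) : ℂ) * ((z - 1) / 2) ^ m else 0 := by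
    intro k hk
    obtain ⟨b, rfl⟩ := Nat.exists_eq_add_of_le (Nat.lt_succ_iff.mp (Finset.mem_range.mp hk))
    have e : k + b + 1 = k + (b + 1) := by ring
    have e1 : k + b - k = b := by omega
    rw [e, Finset.sum_range_add, Finset.sum_eq_zero, zero_add]
    · have hz : z + 1 = 2 * ((z - 1) / 2 + 1) := by ring
      have hz' : z - 1 = 2 * ((z - 1) / 2) := by ring
      generalize (z - 1) / 2 = w at *
      rw [hz, hz', e1, mul_pow, mul_pow, add_pow]
      simp only [Finset.mul_sum, one_pow, mul_one]
      apply Finset.sum_congr rfl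
      intro x _
      have e2 : k + x - k = x := by omega
      rw [if_pos (by omega), e2, pow_add, pow_add]
      push_cast
      field_simp
    · intro x hx
      have := Finset.mem_range.mp hx
      rw [if_neg (by omega)]
  rw [jacobiC, Finset.mul_sum, Finset.sum_congr rfl key, Finset.sum_comm]
  apply Finset.sum_congr rfl
  intro m hm
  have hm := Finset.mem_range.mp hm
  rw [← sum_gbinom α β n m (by omega), ← Finset.sum_filter]
  have : Finset.filter (fun k => k ≤ m) (Finset.range (n + 1)) = Finset.range (m + 1) := by
    ext k; simp; omega
  rw [this]
  push_cast
  rw [Finset.sum_mul]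

lemma pow_expand (u : ℂ) (hu : u ≠ 0) (n m : ℕ) (hm : m ≤ n) :
    (((u + u⁻¹) / 2 - 1) / 2) ^ m = ∑ k ∈ Finset.Icc (-(n : ℤ)) (n : ℤ),
      (((1 / 4) ^ m * (-1) ^ (m + k.natAbs) * ((2 * m).choose (m + k.natAbs) : ℝ) : ℝ) : ℂ)
        * u ^ k := by
  have h0 : ((u + u⁻¹) / 2 - 1) / 2 = (1 / 4) * (u⁻¹ * (u - 1) ^ 2) := by
    field_simp; ring
  rw [← Finset.sum_subset (s₁ := Finset.Icc (-(m : ℤ)) (m : ℤ))]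
  · rw [h0, mul_pow, mul_pow, ← pow_mul, sub_eq_add_neg, add_pow, Finset.mul_sum, Finset.mul_sum]
    apply Finset.sum_bij (fun (i : ℕ) _ => (i : ℤ) - m)
    · intro i hi
      simp at hi ⊢
      omega
    · intro i _ j _ h
      simp at h
      exact h
    · intro b hb
      simp at hb
      refine ⟨(b + m).toNat, ?_, ?_⟩
      · simp; omega
      · omega
    · intro i hi
      have hi := Finset.mem_range.mp hi
      have hc : (2 * m).choose (m + ((i : ℤ) - m).natAbs) = (2 * m).choose i := by
        rcases le_total m i with h | h
        · congr 1; omega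
        · rw [← Nat.choose_symm (show i ≤ 2 * m by omega)]
          congr 1; omega
      have hs : (-1 : ℂ) ^ (m + ((i : ℤ) - m).natAbs) = (-1) ^ (2 * m - i) := by
        rcases le_total m i with h | h
        · rw [show m + ((i : ℤ) - m).natAbs = (2 * m - i) + 2 * (i - m) by omega, pow_add, pow_mul]
          simp
        · congr 1; omega
      rw [hc]
      push_cast
      rw [hs, zpow_sub₀ hu, zpow_natCast, zpow_natCast, inv_pow]
      field_simp
  · intro k hk; simp at hk ⊢; omega
  · intro k _ hk
    rw [Nat.choose_eq_zero_of_lt]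
    · simp
    · simp at hk; omega

lemma poch_neg (p j : ℕ) (hj : j ≤ p) :
    poch (-(p : ℝ)) j * (Nat.factorial (p - j)) = (-1) ^ j * Nat.factorial p := by
  induction j with
  | zero => simp [poch]
  | succ j ih =>
    have ih := ih (by omega)
    have e : p - j = (p - (j + 1)) + 1 := by omega
    rw [e, Nat.factorial_succ, ← e] at ih
    rw [poch_succ, pow_succ]
    push_cast [Nat.cast_sub (show j ≤ p by omega)] at ih
    linear_combination (-1) * ih

lemma fact_poch (k j : ℕ) :
    ((2 * k + j).factorial : ℝ) = (2 * k).factorial * poch (2 * (k : ℝ) + 1) j := by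
  induction j with
  | zero => simp [poch]
  | succ j ih =>
    rw [← add_assoc, Nat.factorial_succ, poch_succ]
    push_cast
    rw [ih]; ring

lemma fact_half (k j : ℕ) :
    ((2 * (k + j)).factorial : ℝ) * k.factorial =
      4 ^ j * poch ((k : ℝ) + 1 / 2) j * (2 * k).factorial * (k + j).factorial := by
  induction j with
  | zero => simp [poch]
  | succ j ih =>
    rw [show 2 * (k + (j + 1)) = 2 * (k + j) + 1 + 1 by ring, ← add_assoc, Nat.factorial_succ,
      Nat.factorial_succ, Nat.factorial_succ, poch_succ]
    push_cast
    linear_combination (2 * ((k : ℝ) + j) + 1 + 1) * (2 * (k + j) + 1) * ih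

lemma dCoeff_eq (α β : ℝ) (hα : -1 < α) (n k : ℕ) (hk : k ≤ n) :
    dCoeff α β n k = ∑ m ∈ Finset.range (n + 1),
      cCoeff α β n m * ((1 / 4) ^ m * (-1) ^ (m + k) * ((2 * m).choose (m + k) : ℝ)) := by
  obtain ⟨p, rfl⟩ := Nat.exists_eq_add_of_le hk
  have e1 : k + p - k = p := by omega
  rw [add_assoc, Finset.sum_range_add, Finset.sum_eq_zero, zero_add, dCoeff, e1, Finset.mul_sum]
  · apply Finset.sum_congr rfl
    intro j hj
    have hj := Finset.mem_range.mp hj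
    obtain ⟨q, rfl⟩ := Nat.exists_eq_add_of_le (show j ≤ p by omega)
    have e2 : k + (j + q) - (k + j) = q := by omega
    rw [cCoeff, e2]
    have g1 := poch_neg (j + q) j (by omega)
    rw [show j + q - j = q by omega] at g1
    have g2 := fact_poch k j
    have g3 := fact_half k j
    rw [Nat.cast_choose ℝ (show k + j + k ≤ 2 * (k + j) by omega),
      show 2 * (k + j) - (k + j + k) = j by omega, show k + j + k = 2 * k + j by ring, g2,
      poch_add _ k j, poch_add _ j q]
    have f1 : (k : ℝ) - ((k + (j + q) : ℕ) : ℝ) = -((j + q : ℕ) : ℝ) := by push_cast; ring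
    have f2 : ((k + (j + q) : ℕ) : ℝ) + α + β + 1 + k = ((k + (j + q) : ℕ) : ℝ) + k + α + β + 1 := by
      ring
    have f3 : ((k + j : ℕ) : ℝ) + α + 1 = k + α + 1 + j := by push_cast; ring
    rw [f1, f2, f3]
    have p1 := (poch_pos ((k : ℝ) + α + 1)
      (by have : (0 : ℝ) ≤ k := by positivity
          linarith) j).ne'
    have p2 := (poch_pos (2 * (k : ℝ) + 1) (by positivity) j).ne'
    have n1 : (Nat.factorial q : ℝ) ≠ 0 := by positivity
    have n2 : (Nat.factorial (j + q) : ℝ) ≠ 0 := by positivity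
    have n3 : (Nat.factorial k : ℝ) ≠ 0 := by positivity
    have n4 : (Nat.factorial j : ℝ) ≠ 0 := by positivity
    have n5 : (Nat.factorial (2 * k) : ℝ) ≠ 0 := by positivity
    have n6 : (Nat.factorial (k + j) : ℝ) ≠ 0 := by positivity
    have s1 : poch (-((j + q : ℕ) : ℝ)) j = (-1) ^ j * (j + q).factorial / q.factorial := by
      rw [eq_div_iff n1, g1]
    have s2 : ((2 * (k + j)).factorial : ℝ) =
      4 ^ j * poch ((k : ℝ) + 1 / 2) j * (2 * k).factorial * (k + j).factorial / k.factorial := by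
      rw [eq_div_iff n3, g3]
    have s3 : (-1 : ℝ) ^ (2 * k + j) = (-1) ^ j := by
      rw [pow_add, pow_mul]; simp
    have s4 : (2 : ℝ) ^ (2 * k) = 4 ^ k := by rw [pow_mul]; norm_num
    have s5 : (1 / 4 : ℝ) ^ (k + j) = 1 / (4 ^ k * 4 ^ j) := by rw [div_pow, one_pow, pow_add]
    rw [s1, s2, s3, s4, s5]
    field_simp
  · intro m hm
    have hm := Finset.mem_range.mp hm
    rw [Nat.choose_eq_zero_of_lt (by omega)]
    simp

/-- For `α, β > -1`, `ρ ≥ 1` and `|u| = ρ`, with `z = (u + u⁻¹)/2 ∈ E_ρ`,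
`P_n^{(α,β)}(z) = ∑_{k=-n}^{n} d_{|k|,n} u^k`. -/
theorem jacobi_explicit_on_bernstein_ellipse
    (α β : ℝ) (hα : -1 < α) (hβ : -1 < β) (n : ℕ)
    (ρ : ℝ) (hρ : 1 ≤ ρ) (u : ℂ) (hu : ‖u‖ = ρ) :
    jacobiC α β n ((u + u⁻¹) / 2) =
      ∑ k ∈ Finset.Icc (-(n : ℤ)) (n : ℤ), ((dCoeff α β n k.natAbs : ℝ) : ℂ) * u ^ k := by
  have hu0 : u ≠ 0 := by
    rintro rfl
    simp at hu
    linarith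
  rw [jacobiC_eq]
  have h1 : ∀ m ∈ Finset.range (n + 1),
      (cCoeff α β n m : ℂ) * (((u + u⁻¹) / 2 - 1) / 2) ^ m =
      ∑ k ∈ Finset.Icc (-(n : ℤ)) (n : ℤ), (cCoeff α β n m : ℂ) *
      ((((1 / 4) ^ m * (-1) ^ (m + k.natAbs) * ((2 * m).choose (m + k.natAbs) : ℝ) : ℝ) : ℂ)
        * u ^ k) := by
    intro m hm
    have hm := Finset.mem_range.mp hm
    rw [pow_expand u hu0 n m (by omega), Finset.mul_sum]
  rw [Finset.sum_congr rfl h1, Finset.sum_comm]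
  apply Finset.sum_congr rfl
  intro k hk
  have hk' : k.natAbs ≤ n := by
    have := Finset.mem_Icc.mp hk
    omega
  rw [dCoeff_eq α β hα n k.natAbs hk', Complex.ofReal_sum, Finset.sum_mul]
  apply Finset.sum_congr rfl
  intro m _
  push_cast
  ring
end

section
/- Let α, β > −1 with α < β and α + β ≥ −1, and let n ≥ 1 be an integer. Then (−1)^{n−k} d_{k,n} > 0 for every integer k with 0 ≤ k ≤ n; in particular, the sequence {d_{k,n}}_{k=0}^{n} is alternating in sign. -/
open Finset

lemma poch_zero_eq (x : ℝ) : poch x 0 = 1 := by simp [poch]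

lemma poch_succ_right (x : ℝ) (j : ℕ) : poch x (j + 1) = poch x j * (x + j) := by
  simp [poch, Finset.prod_range_succ]

lemma poch_succ_left (x : ℝ) (j : ℕ) : poch x (j + 1) = x * poch (x + 1) j := by
  unfold poch
  rw [Finset.prod_range_succ', mul_comm]
  congr 1
  · simp
  · apply Finset.prod_congr rfl
    intro i _
    push_cast
    ring

lemma poch_pos_s5 (x : ℝ) (hx : 0 < x) (j : ℕ) : 0 < poch x j := by
  apply Finset.prod_pos
  intro i _
  positivity

lemma poch_neg_zero (n j : ℕ) (h : n < j) : poch (-(n : ℝ)) j = 0 := by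
  apply Finset.prod_eq_zero (Finset.mem_range.mpr h)
  simp

/-- Coefficients of the normalized Jacobi polynomial. -/
noncomputable def cc (A B : ℝ) (m j : ℕ) : ℝ :=
  poch (-(m : ℝ)) j * poch (m + A + B - 1) j / (poch A j * (Nat.factorial j))

/-- Coefficients of the normalized derivative family. -/
noncomputable def ee (A B : ℝ) (n j : ℕ) : ℝ :=
  poch (-(n : ℝ)) j * poch (n + A + B + 1) j / (poch (A + 1) j * (Nat.factorial j))

/-- Moments. -/
noncomputable def ll (h : ℝ) (j : ℕ) : ℝ := poch h j / poch (2 * h) j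

noncomputable def QQ (A B h : ℝ) (n : ℕ) : ℝ :=
  ∑ j ∈ Finset.range (n + 1), ee A B n j * ll h j

noncomputable def UU (A B h : ℝ) (n : ℕ) : ℝ :=
  ∑ j ∈ Finset.range (n + 1), ee A B n j * ll h (j + 1)

noncomputable def MM (A B h : ℝ) (n : ℕ) : ℝ :=
  ∑ j ∈ Finset.range (n + 1), cc A B n j * ll h j

lemma ee_zero (A B : ℝ) (n j : ℕ) (h : n < j) : ee A B n j = 0 := by
  simp [ee, poch_neg_zero n j h]

lemma cc_zero (A B : ℝ) (n j : ℕ) (h : n < j) : cc A B n j = 0 := by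
  simp [cc, poch_neg_zero n j h]

lemma sum_ext (f g : ℕ → ℝ) (n R : ℕ) (hf : ∀ j, n < j → f j = 0) (hR : n + 1 ≤ R) :
    ∑ j ∈ Finset.range (n + 1), f j * g j = ∑ j ∈ Finset.range R, f j * g j := by
  apply Finset.sum_subset
  · intro i hi
    simp only [Finset.mem_range] at *
    omega
  · intro i _ hi
    simp only [Finset.mem_range] at *
    rw [hf i (by omega), zero_mul]

lemma QQ_eq (A B h : ℝ) (n R : ℕ) (hR : n + 1 ≤ R) :
    QQ A B h n = ∑ j ∈ Finset.range R, ee A B n j * ll h j :=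
  sum_ext _ _ n R (ee_zero A B n) hR

lemma UU_eq (A B h : ℝ) (n R : ℕ) (hR : n + 1 ≤ R) :
    UU A B h n = ∑ j ∈ Finset.range R, ee A B n j * ll h (j + 1) :=
  sum_ext _ (fun j => ll h (j + 1)) n R (ee_zero A B n) hR

lemma MM_eq (A B h : ℝ) (n R : ℕ) (hR : n + 1 ≤ R) :
    MM A B h n = ∑ j ∈ Finset.range R, cc A B n j * ll h j :=
  sum_ext _ _ n R (cc_zero A B n) hR

noncomputable def An (A B : ℝ) (n : ℝ) : ℝ :=
  (n + A + B + 1) * (n + A + 1) / ((2 * n + A + B + 1) * (2 * n + A + B + 2))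

noncomputable def Cn (A B : ℝ) (n : ℝ) : ℝ :=
  n * (n + B) / ((2 * n + A + B) * (2 * n + A + B + 1))

/-- Three-term recurrence, coefficientwise. -/
lemma ee_rec_zero (A B : ℝ) (n : ℕ) :
    0 = -An A B (n + 1) * ee A B (n + 2) 0 + (An A B (n + 1) + Cn A B (n + 1)) * ee A B (n + 1) 0
      - Cn A B (n + 1) * ee A B n 0 := by
  simp [ee, poch_zero_eq]

lemma poch_two (x : ℝ) (j : ℕ) : poch x (j + 2) = x * (x + 1) * poch (x + 2) j := by
  rw [poch_succ_left, poch_succ_left, show x + 1 + 1 = x + 2 by ring]; ring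

lemma poch_two_b (x : ℝ) (j : ℕ) :
    poch (x + 1) (j + 2) = (x + 1) * poch (x + 2) j * (x + j + 2) := by
  rw [poch_succ_left, poch_succ_right, show x + 1 + 1 = x + 2 by ring]; ring

lemma poch_two_c (x : ℝ) (j : ℕ) :
    poch (x + 2) (j + 2) = poch (x + 2) j * (x + j + 2) * (x + j + 3) := by
  rw [poch_succ_right, poch_succ_right]; push_cast; ring

lemma ee_rec_succ (A B : ℝ) (hA : 0 < A) (hB : 0 < B) (n j : ℕ) :
    ee A B (n + 1) j = -An A B (n + 1) * ee A B (n + 2) (j + 1)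
      + (An A B (n + 1) + Cn A B (n + 1)) * ee A B (n + 1) (j + 1)
      - Cn A B (n + 1) * ee A B n (j + 1) := by
  unfold ee An Cn
  rcases j with _ | j
  · simp only [poch_succ_right, poch_zero_eq, Nat.factorial]
    push_cast
    field_simp
    ring
  · have e1 : ∀ i, poch (-((n + 2 : ℕ) : ℝ)) i = poch (-(n : ℝ) - 2) i := by
      intro i; congr 1; push_cast; ring
    have e2 : ∀ i, poch (-((n + 1 : ℕ) : ℝ)) i = poch (-(n : ℝ) - 2 + 1) i := by
      intro i; congr 1; push_cast; ring
    have e3 : ∀ i, poch (-(n : ℝ)) i = poch (-(n : ℝ) - 2 + 2) i := by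
      intro i; congr 1; ring
    have f1 : ∀ i, poch (((n + 2 : ℕ) : ℝ) + A + B + 1) i = poch ((n + A + B + 1) + 2) i := by
      intro i; congr 1; push_cast; ring
    have f2 : ∀ i, poch (((n + 1 : ℕ) : ℝ) + A + B + 1) i = poch ((n + A + B + 1) + 1) i := by
      intro i; congr 1; push_cast; ring
    rw [e1, e2, e2, e3, f1, f2, f2]
    rw [show j + 1 + 1 = j + 2 by rfl]
    rw [poch_two (-(n : ℝ) - 2), poch_two_b (-(n : ℝ) - 2), poch_two_c (-(n : ℝ) - 2), poch_two (n + A + B + 1), poch_two_b (n + A + B + 1),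
      poch_two_c (n + A + B + 1), poch_succ_left (-(n : ℝ) - 2 + 1) j, poch_succ_left ((n + A + B + 1) + 1) j,
      poch_succ_right (A + 1) (j + 1), Nat.factorial_succ (j + 1),
      show -(n : ℝ) - 2 + 1 + 1 = -(n : ℝ) - 2 + 2 by ring,
      show (n + A + B + 1) + 1 + 1 = (n + A + B + 1) + 2 by ring]
    have hp := poch_pos_s5 (A + 1) (by positivity) (j + 1)
    have hf : (0 : ℝ) < (Nat.factorial (j + 1) : ℝ) := by positivity
    generalize poch (A + 1) (j + 1) = w at *
    generalize poch (-(n : ℝ) - 2 + 2) j = u at *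
    generalize poch ((n + A + B + 1) + 2) j = v at *
    push_cast
    generalize (Nat.factorial (j + 1) : ℝ) = f at *
    field_simp
    ring

noncomputable def XX (A B : ℝ) (m : ℝ) : ℝ :=
  (m + A + B - 1) * (m + A + B) * (m + A) / ((2 * m + A + B - 1) * (2 * m + A + B) * A)
noncomputable def YY (A B : ℝ) (m : ℝ) : ℝ :=
  m * (m + A + B - 1) * (A - B) / (A * (2 * m + A + B - 2) * (2 * m + A + B))
noncomputable def ZZ (A B : ℝ) (m : ℝ) : ℝ :=
  -(m * (m - 1) * (m + B - 1)) / ((2 * m + A + B - 2) * (2 * m + A + B - 1) * A)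

lemma cc_conn (A B : ℝ) (hA : 0 < A) (hB : 0 < B) (n j : ℕ) :
    cc A B (n + 2) j = XX A B (n + 2) * ee A B (n + 2) j + YY A B (n + 2) * ee A B (n + 1) j
      + ZZ A B (n + 2) * ee A B n j := by
  unfold cc ee XX YY ZZ
  have d1 : (0 : ℝ) < 2 * (n + 2) + A + B - 1 := by
    have : (0 : ℝ) ≤ n := by positivity
    linarith
  have d2 : (0 : ℝ) < 2 * (n + 2) + A + B - 2 := by
    have : (0 : ℝ) ≤ n := by positivity
    linarith
  have d1' := d1.ne'
  have d2' := d2.ne'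
  rcases j with _ | _ | j
  · simp only [poch_zero_eq, Nat.factorial]
    push_cast
    field_simp
    ring
  · simp only [poch_succ_right, poch_zero_eq, Nat.factorial]
    push_cast
    field_simp
    ring
  · have e1 : ∀ i, poch (-((n + 2 : ℕ) : ℝ)) i = poch (-(n : ℝ) - 2) i := by
      intro i; congr 1; push_cast; ring
    have e2 : ∀ i, poch (-((n + 1 : ℕ) : ℝ)) i = poch (-(n : ℝ) - 2 + 1) i := by
      intro i; congr 1; push_cast; ring
    have e3 : ∀ i, poch (-(n : ℝ)) i = poch (-(n : ℝ) - 2 + 2) i := by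
      intro i; congr 1; ring
    have f0 : ∀ i, poch (((n + 2 : ℕ) : ℝ) + A + B - 1) i = poch (n + A + B + 1) i := by
      intro i; congr 1; push_cast; ring
    have f1 : ∀ i, poch (((n + 2 : ℕ) : ℝ) + A + B + 1) i = poch ((n + A + B + 1) + 2) i := by
      intro i; congr 1; push_cast; ring
    have f2 : ∀ i, poch (((n + 1 : ℕ) : ℝ) + A + B + 1) i = poch ((n + A + B + 1) + 1) i := by
      intro i; congr 1; push_cast; ring
    rw [e1, e2, e3, f0, f1, f2]
    rw [show j + 1 + 1 = j + 2 by rfl]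
    rw [poch_two (-(n : ℝ) - 2), poch_two_b (-(n : ℝ) - 2), poch_two_c (-(n : ℝ) - 2), poch_two (n + A + B + 1), poch_two_b (n + A + B + 1),
      poch_two_c (n + A + B + 1), poch_succ_left A (j + 1), poch_succ_right (A + 1) (j + 1)]
    have hp := poch_pos_s5 (A + 1) (by positivity) (j + 1)
    have hf : (0 : ℝ) < (Nat.factorial (j + 2) : ℝ) := by positivity
    generalize poch (A + 1) (j + 1) = w at *
    generalize poch (-(n : ℝ) - 2 + 2) j = u at *
    generalize poch ((n + A + B + 1) + 2) j = v at *
    generalize (Nat.factorial (j + 2) : ℝ) = f at *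
    push_cast
    field_simp
    ring

lemma UU_rec (A B h : ℝ) (hA : 0 < A) (hB : 0 < B) (n : ℕ) :
    UU A B h (n + 1) = -An A B (n + 1) * QQ A B h (n + 2)
      + (An A B (n + 1) + Cn A B (n + 1)) * QQ A B h (n + 1) - Cn A B (n + 1) * QQ A B h n := by
  rw [UU_eq A B h (n + 1) (n + 2) (by omega), QQ_eq A B h (n + 2) (n + 2 + 1) (by omega),
    QQ_eq A B h (n + 1) (n + 2 + 1) (by omega), QQ_eq A B h n (n + 2 + 1) (by omega)]
  simp only [Finset.mul_sum]
  rw [← Finset.sum_add_distrib, ← Finset.sum_sub_distrib, Finset.sum_range_succ' _ (n + 2)]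
  have h0 := ee_rec_zero A B n
  rw [show ∀ S : ℝ, S + (-An A B (n + 1) * (ee A B (n + 2) 0 * ll h 0)
      + (An A B (n + 1) + Cn A B (n + 1)) * (ee A B (n + 1) 0 * ll h 0)
      - Cn A B (n + 1) * (ee A B n 0 * ll h 0)) = S by
    intro S
    linear_combination (-ll h 0) * h0]
  apply Finset.sum_congr rfl
  intro j _
  rw [ee_rec_succ A B hA hB n j]
  ring

lemma MM_conn (A B h : ℝ) (hA : 0 < A) (hB : 0 < B) (n : ℕ) :
    MM A B h (n + 2) = XX A B (n + 2) * QQ A B h (n + 2) + YY A B (n + 2) * QQ A B h (n + 1)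
      + ZZ A B (n + 2) * QQ A B h n := by
  rw [MM_eq A B h (n + 2) (n + 2 + 1) (by omega), QQ_eq A B h (n + 2) (n + 2 + 1) (by omega),
    QQ_eq A B h (n + 1) (n + 2 + 1) (by omega), QQ_eq A B h n (n + 2 + 1) (by omega)]
  simp only [Finset.mul_sum]
  rw [← Finset.sum_add_distrib, ← Finset.sum_add_distrib]
  apply Finset.sum_congr rfl
  intro j _
  rw [cc_conn A B hA hB n j]
  ring

lemma ll_succ (h : ℝ) (hh : 0 < h) (j : ℕ) : (2 * h + j) * ll h (j + 1) = (h + j) * ll h j := by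
  unfold ll
  have := poch_pos_s5 (2 * h) (by positivity) j
  rw [poch_succ_right, poch_succ_right]
  field_simp

/-- telescoping certificate -/
noncomputable def FF (A B h : ℝ) (n : ℕ) : ℕ → ℝ
  | 0 => 0
  | (j + 1) => -(j + A + B) * ee A B n j * ll h (j + 1)

lemma MM_cert (A B h : ℝ) (hA : 0 < A) (hB : 0 < B) (hh : 0 < h) (n j : ℕ) :
    A * (cc A B (n + 1) j * ll h j) = (FF A B h n j - FF A B h n (j + 1))
      + ((A - h) * (ee A B n j * ll h j) - (A + B - 2 * h) * (ee A B n j * ll h (j + 1))) := by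
  have hl := ll_succ h hh j
  have key : A * (cc A B (n + 1) j * ll h j) = FF A B h n j + (j + A) * ee A B n j * ll h j := by
    rcases j with _ | j
    · simp [cc, ee, FF, poch_zero_eq]
    · simp only [FF, cc, ee]
      have e2 : poch (-((n + 1 : ℕ) : ℝ)) (j + 1) = -(n + 1) * poch (-(n : ℝ)) j := by
        rw [poch_succ_left]
        congr 2 <;> (push_cast; ring)
      have f2 : poch (((n + 1 : ℕ) : ℝ) + A + B - 1) (j + 1)
          = (n + A + B) * poch (n + A + B + 1) j := by
        rw [poch_succ_left]
        congr 2 <;> (push_cast; ring)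
      rw [e2, f2, poch_succ_left A j, poch_succ_right (A + 1) j, poch_succ_right (-(n : ℝ)) j,
        poch_succ_right (n + A + B + 1) j, Nat.factorial_succ]
      have hp := poch_pos_s5 (A + 1) (by positivity) j
      have hf : (0 : ℝ) < (Nat.factorial j : ℝ) := by positivity
      generalize poch (A + 1) j = w at *
      push_cast
      generalize (Nat.factorial j : ℝ) = f at *
      field_simp
      ring
  rw [key]
  simp only [FF]
  linear_combination (-ee A B n j) * hl

lemma MM_UU (A B h : ℝ) (hA : 0 < A) (hB : 0 < B) (hh : 0 < h) (n : ℕ) :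
    A * MM A B h (n + 1) = (A - h) * QQ A B h n - (A + B - 2 * h) * UU A B h n := by
  rw [MM_eq A B h (n + 1) (n + 2) (by omega), QQ_eq A B h n (n + 2) (by omega),
    UU_eq A B h n (n + 2) (by omega)]
  simp only [Finset.mul_sum]
  rw [Finset.sum_congr rfl (fun j _ => MM_cert A B h hA hB hh n j), Finset.sum_add_distrib,
    Finset.sum_range_sub', Finset.sum_sub_distrib]
  have : FF A B h n (n + 2) = 0 := by
    simp only [FF]
    rw [ee_zero A B n (n + 1) (by omega)]
    ring
  rw [this]
  simp [FF]

lemma QQ_rec (A B h : ℝ) (hA : 0 < A) (hB : 0 < B) (hh : 0 < h) (n : ℕ) :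
    (A * XX A B (n + 2) - (A + B - 2 * h) * An A B (n + 1)) * QQ A B h (n + 2)
      = (A - h - (A + B - 2 * h) * (An A B (n + 1) + Cn A B (n + 1)) - A * YY A B (n + 2))
          * QQ A B h (n + 1)
        + ((A + B - 2 * h) * Cn A B (n + 1) - A * ZZ A B (n + 2)) * QQ A B h n := by
  have h1 := MM_UU A B h hA hB hh (n + 1)
  rw [UU_rec A B h hA hB n, show n + 1 + 1 = n + 2 by rfl, MM_conn A B h hA hB n] at h1
  linear_combination h1

lemma An_pos (A B : ℝ) (hA : 0 < A) (hB : 0 < B) (n : ℕ) : 0 < An A B (n + 1) := by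
  unfold An; positivity

lemma Cn_pos (A B : ℝ) (hA : 0 < A) (hB : 0 < B) (n : ℕ) : 0 < Cn A B (n + 1) := by
  unfold Cn; positivity

lemma coef1 (A B h : ℝ) (hA : 0 < A) (hB : 0 < B) (hh : 0 < h) (n : ℕ) :
    0 < A * XX A B (n + 2) - (A + B - 2 * h) * An A B (n + 1) := by
  have : A * XX A B (n + 2) - (A + B - 2 * h) * An A B (n + 1)
      = (n + 1 + 2 * h) * An A B (n + 1) := by
    unfold XX An
    rw [show (2 * ((n : ℝ) + 2) + A + B - 1) = 2 * (n + 1) + A + B + 1 by ring,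
      show (2 * ((n : ℝ) + 2) + A + B) = 2 * (n + 1) + A + B + 2 by ring]
    field_simp
    ring
  rw [this]
  have := An_pos A B hA hB n
  positivity

lemma coef3 (A B h : ℝ) (hA : 0 < A) (hB : 0 < B) (hs : 2 * h ≤ A + B) (n : ℕ) :
    0 < (A + B - 2 * h) * Cn A B (n + 1) - A * ZZ A B (n + 2) := by
  have h1 : A * ZZ A B (n + 2) = - ((n + 2) * Cn A B (n + 1)) := by
    unfold ZZ Cn
    rw [show (2 * ((n : ℝ) + 2) + A + B - 1) = 2 * (n + 1) + A + B + 1 by ring,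
      show (2 * ((n : ℝ) + 2) + A + B - 2) = 2 * (n + 1) + A + B by ring]
    field_simp
    ring
  rw [h1]
  have h2 := Cn_pos A B hA hB n
  have h3 : 0 ≤ A + B - 2 * h := by linarith
  have : 0 ≤ (A + B - 2 * h) * Cn A B (n + 1) := by positivity
  have : 0 < (n + 2 : ℝ) * Cn A B (n + 1) := by positivity
  linarith

lemma coef2a_eq (A B h : ℝ) (hA : 0 < A) (hB : 0 < B) (n : ℕ) :
    A - h - (A + B - 2 * h) * (An A B (n + 1) + Cn A B (n + 1))
      = -((B - A) / (2 * ((2 * (n + 1) + A + B) * (2 * (n + 1) + A + B + 2)))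
          * (4 * (n + 2) * (n + 1 + A + B) + (A + B) * (2 * h - 2))) := by
  unfold An Cn
  field_simp
  ring

lemma coef2y_eq (A B : ℝ) (hA : 0 < A) (hB : 0 < B) (n : ℕ) :
    A * YY A B (n + 2)
      = -((B - A) / (2 * ((2 * (n + 1) + A + B) * (2 * (n + 1) + A + B + 2)))
          * (2 * (n + 2) * (n + 1 + A + B))) := by
  unfold YY
  rw [show (2 * ((n : ℝ) + 2) + A + B - 2) = 2 * (n + 1) + A + B by ring,
      show (2 * ((n : ℝ) + 2) + A + B) = 2 * (n + 1) + A + B + 2 by ring]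
  field_simp
  ring

lemma coef2a (A B h : ℝ) (hA : 0 < A) (hB : A < B) (hh : 0 < h) (n : ℕ) :
    A - h - (A + B - 2 * h) * (An A B (n + 1) + Cn A B (n + 1)) < 0 := by
  have hB' : 0 < B := by linarith
  rw [coef2a_eq A B h hA hB' n]
  have h1 : 0 < B - A := by linarith
  have h2 : 4 * ((n : ℝ) + 2) * (n + 1 + A + B) + (A + B) * (2 * h - 2)
    = 4 * (n + 2) * (n + 1) + (4 * n + 6) * (A + B) + 2 * h * (A + B) := by ring
  rw [h2, neg_lt_zero]
  positivity

lemma coef2 (A B h : ℝ) (hA : 0 < A) (hB : A < B) (hh : 0 < h) (n : ℕ) :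
    A - h - (A + B - 2 * h) * (An A B (n + 1) + Cn A B (n + 1)) - A * YY A B (n + 2) < 0 := by
  have hB' : 0 < B := by linarith
  rw [coef2a_eq A B h hA hB' n, coef2y_eq A B hA hB' n]
  have h1 : 0 < B - A := by linarith
  rw [neg_sub_neg, ← mul_sub]
  have h2 : 2 * ((n : ℝ) + 2) * (n + 1 + A + B)
      - (4 * ((n : ℝ) + 2) * (n + 1 + A + B) + (A + B) * (2 * h - 2))
    = -(2 * (n + 2) * (n + 1) + (2 * n + 2) * (A + B) + 2 * h * (A + B)) := by ring
  rw [h2, mul_neg, neg_lt_zero]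
  positivity

lemma QQ_zero (A B h : ℝ) : QQ A B h 0 = 1 := by
  simp [QQ, ee, ll, poch_zero_eq]

lemma QQ_one (A B h : ℝ) (hA : 0 < A) (hh : 0 < h) : QQ A B h 1 = -((B - A) / (2 * (A + 1))) := by
  simp [QQ, ee, ll, poch_zero_eq, poch_succ_right, Finset.sum_range_succ]
  field_simp
  ring

lemma MM_one (A B h : ℝ) (hA : 0 < A) (hh : 0 < h) : MM A B h 1 = -((B - A) / (2 * A)) := by
  simp [MM, cc, ll, poch_zero_eq, poch_succ_right, Finset.sum_range_succ]
  field_simp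
  ring

lemma MM_zero (A B h : ℝ) : MM A B h 0 = 1 := by
  simp [MM, cc, ll, poch_zero_eq]

lemma QQ_sign (A B h : ℝ) (hA : 0 < A) (hB : A < B) (hh : 0 < h) (hs : 2 * h ≤ A + B) (n : ℕ) :
    0 < (-1 : ℝ) ^ n * QQ A B h n ∧ 0 < (-1 : ℝ) ^ (n + 1) * QQ A B h (n + 1) := by
  have h1 : 0 < B - A := by linarith
  induction n with
  | zero =>
    rw [QQ_zero, QQ_one A B h hA hh]
    refine ⟨by simp, ?_⟩
    simp only [zero_add, pow_one, neg_mul_neg, one_mul]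
    positivity
  | succ n ih =>
    refine ⟨ih.2, ?_⟩
    obtain ⟨i0, i1⟩ := ih
    have c1 := coef1 A B h hA (by linarith) hh n
    have c2 := coef2 A B h hA hB hh n
    have c3 := coef3 A B h hA (by linarith) hs n
    have r := QQ_rec A B h hA (by linarith) hh n
    generalize (A * XX A B (n + 2) - (A + B - 2 * h) * An A B (n + 1)) = x at *
    generalize (A - h - (A + B - 2 * h) * (An A B (n + 1) + Cn A B (n + 1))
      - A * YY A B (n + 2)) = y at *
    generalize ((A + B - 2 * h) * Cn A B (n + 1) - A * ZZ A B (n + 2)) = z at *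
    have hx : x * ((-1 : ℝ) ^ (n + 1 + 1) * QQ A B h (n + 1 + 1))
        = (-y) * ((-1 : ℝ) ^ (n + 1) * QQ A B h (n + 1)) + z * ((-1 : ℝ) ^ n * QQ A B h n) := by
      rw [pow_succ, pow_succ]
      linear_combination ((-1 : ℝ) ^ n) * r
    have p1 := mul_pos (neg_pos.mpr c2) i1
    have p2 := mul_pos c3 i0
    exact pos_of_mul_pos_right (a := x) (by linarith) c1.le

lemma MM_sign (A B h : ℝ) (hA : 0 < A) (hB : A < B) (hh : 0 < h) (hs : 2 * h ≤ A + B) (n : ℕ) :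
    0 < (-1 : ℝ) ^ n * MM A B h n := by
  have h1 : 0 < B - A := by linarith
  rcases n with _ | _ | n
  · simp [MM_zero]
  · rw [zero_add, MM_one A B h hA hh, pow_one, neg_mul_neg, one_mul]
    positivity
  · have r := MM_UU A B h hA (by linarith) hh (n + 1)
    rw [UU_rec A B h hA (by linarith) n] at r
    have i0 := (QQ_sign A B h hA hB hh hs n).1
    have i1 := (QQ_sign A B h hA hB hh hs n).2
    have i2 := (QQ_sign A B h hA hB hh hs (n + 1)).2
    have c2 := coef2a A B h hA hB hh n
    have ca := An_pos A B hA (by linarith) n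
    have cc := Cn_pos A B hA (by linarith) n
    have hd : 0 ≤ A + B - 2 * h := by linarith
    have hx : A * ((-1 : ℝ) ^ (n + 1 + 1) * MM A B h (n + 1 + 1))
        = (A + B - 2 * h) * An A B (n + 1) * ((-1 : ℝ) ^ (n + 1 + 1) * QQ A B h (n + 1 + 1))
        + (-(A - h - (A + B - 2 * h) * (An A B (n + 1) + Cn A B (n + 1))))
          * ((-1 : ℝ) ^ (n + 1) * QQ A B h (n + 1))
        + (A + B - 2 * h) * Cn A B (n + 1) * ((-1 : ℝ) ^ n * QQ A B h n) := by
      rw [pow_succ, pow_succ]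
      linear_combination ((-1 : ℝ) ^ n) * r
    have p0 := mul_nonneg (mul_nonneg hd ca.le) i2.le
    have p1 := mul_pos (neg_pos.mpr c2) i1
    have p2 := mul_nonneg (mul_nonneg hd cc.le) i0.le
    exact pos_of_mul_pos_right (a := A) (by linarith) hA.le

/-- if `α < β` and `α + β ≥ -1`, then `(-1)^(n-k) d_{k,n} > 0`, i.e. the sequence
`{d_{k,n}}_{k=0}^{n}` is alternating in sign. -/
theorem dCoeff_alternating
    (α β : ℝ) (hα : -1 < α) (hβ : -1 < β) (hab : α < β) (hsum : -1 ≤ α + β)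
    (n : ℕ) (hn : 1 ≤ n) (k : ℕ) (hk0 : 0 ≤ k) (hk : k ≤ n) :
    0 < (-1 : ℝ) ^ (n - k) * dCoeff α β n k := by
  have hk' : (0 : ℝ) ≤ k := by positivity
  have hn' : (1 : ℝ) ≤ n := by exact_mod_cast hn
  have h := MM_sign (k + α + 1) (k + β + 1) (k + 1 / 2) (by linarith) (by linarith) (by linarith)
    (by linarith) (n - k)
  have hS : (∑ j ∈ Finset.range (n - k + 1),
      (poch ((k : ℝ) - n) j * poch ((n : ℝ) + k + α + β + 1) j * poch ((k : ℝ) + 1 / 2) j) /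
        (poch ((k : ℝ) + α + 1) j * poch (2 * (k : ℝ) + 1) j * (Nat.factorial j)))
      = MM (k + α + 1) (k + β + 1) (k + 1 / 2) (n - k) := by
    unfold MM
    apply Finset.sum_congr rfl
    intro j _
    unfold cc ll
    rw [Nat.cast_sub hk, show -((n : ℝ) - k) = k - n by ring,
      show (n : ℝ) - k + (k + α + 1) + (k + β + 1) - 1 = n + k + α + β + 1 by ring,
      show 2 * ((k : ℝ) + 1 / 2) = 2 * k + 1 by ring, div_mul_div_comm]
    congr 1
    ring
  unfold dCoeff
  rw [hS, mul_left_comm]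
  have p1 := poch_pos_s5 ((n : ℝ) + α + β + 1) (by linarith) k
  have p2 := poch_pos_s5 ((k : ℝ) + α + 1) (by linarith) (n - k)
  exact mul_pos (by positivity) h
end

section
/- Let α, β > −1 with α > β and α + β ≥ −1, let ρ ≥ 1 and let n ≥ 1 be an integer. Then for every z on the Bernstein ellipse E_ρ, |P_n^{(α,β)}(z)| ≤ P_n^{(α,β)}((ρ + ρ⁻¹)/2), and equality holds if and only if z = (ρ + ρ⁻¹)/2, i.e. the maximum of |P_n^{(α,β)}| over E_ρ is attained uniquely at the right endpoint of the major axis. -/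
open Finset

open Polynomial in
/-- basis element `(X-1)^(2k) (X+1)^(2m)`. -/
noncomputable def eB (k m : ℕ) : ℝ[X] := (X - 1) ^ (2 * k) * (X + 1) ^ (2 * m)

noncomputable def aC (α β : ℝ) (n k : ℕ) : ℝ :=
  gbinom ((n : ℝ) + α) (n - k) * gbinom ((n : ℝ) + β) k

open Polynomial in
noncomputable def QP (α β : ℝ) (n : ℕ) : ℝ[X] :=
  ∑ k ∈ Finset.range (n + 1), C (aC α β n k) * eB k (n - k)

open Polynomial in
noncomputable def LOp (α β : ℝ) (n : ℕ) (P : ℝ[X]) : ℝ[X] :=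
  (X ^ 3 - X) * derivative (derivative P)
    + (C (2 * n + α + β) + C (2 * (α - β)) * X - C (2 * n - 2 - α - β) * X ^ 2) * derivative P
    - C (2 * (α - β) * n) * P - C (2 * n * (α + β + 1)) * X * P

theorem gbinom_pos (a : ℝ) (m : ℕ) (h : (m : ℝ) < a + 1) : 0 < gbinom a m := by
  unfold gbinom
  apply div_pos _ (by positivity)
  apply Finset.prod_pos
  intro i hi
  have : i + 1 ≤ m := Finset.mem_range.mp hi
  have : (i : ℝ) + 1 ≤ m := by exact_mod_cast this
  linarith

theorem gbinom_succ (a : ℝ) (m : ℕ) : gbinom a (m + 1) * (m + 1) = gbinom a m * (a - m) := by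
  unfold gbinom
  rw [Finset.prod_range_succ, Nat.factorial_succ]
  push_cast
  have : (m.factorial : ℝ) ≠ 0 := by positivity
  have : (m : ℝ) + 1 ≠ 0 := by positivity
  field_simp

theorem aC_pos (α β : ℝ) (hα : -1 < α) (hβ : -1 < β) (n k : ℕ) (hk : k ≤ n) :
    0 < aC α β n k := by
  unfold aC
  apply mul_pos <;> apply gbinom_pos
  · have : ((n - k : ℕ) : ℝ) ≤ n := by exact_mod_cast Nat.sub_le n k
    linarith
  · have : (k : ℝ) ≤ n := by exact_mod_cast hk
    linarith

theorem aC_rec (α β : ℝ) (k m : ℕ) :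
    aC α β (k + 1 + m) (k + 1) * ((k + 1) * (k + 1 + α))
      = aC α β (k + 1 + m) k * ((m + 1) * (m + 1 + β)) := by
  unfold aC
  have e1 : k + 1 + m - (k + 1) = m := by omega
  have e2 : k + 1 + m - k = m + 1 := by omega
  rw [e1, e2]
  have h1 := gbinom_succ (((k + 1 + m : ℕ) : ℝ) + α) m
  have h2 := gbinom_succ (((k + 1 + m : ℕ) : ℝ) + β) k
  push_cast at *
  linear_combination (-(gbinom (k + 1 + m + β) k * (m + 1 + β))) * h1
    + gbinom (k + 1 + m + α) m * (k + 1 + α) * h2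

open Polynomial in
theorem deriv_pow_aux (c : ℝ) (p : ℕ) :
    (X - C c) * derivative ((X - C c) ^ p) = (p : ℝ[X]) * (X - C c) ^ p := by
  rcases p with _ | p
  · simp
  · rw [derivative_X_sub_C_pow]
    simp
    ring

open Polynomial in
theorem LOp_eB (α β : ℝ) (k m : ℕ) :
    (X ^ 2 - 1) * LOp α β (k + m) (eB k m)
      = C (4 * k * (k + α)) * (eB k m * (X + 1) ^ 2)
        - C (4 * m * (m + β)) * (eB k m * (X - 1) ^ 2) := by
  obtain ⟨f, hf⟩ : ∃ f : ℝ[X], f = (X - 1) ^ (2 * k) := ⟨_, rfl⟩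
  obtain ⟨g, hg⟩ : ∃ g : ℝ[X], g = (X + 1) ^ (2 * m) := ⟨_, rfl⟩
  have hf1 : (X - 1) * derivative f = 2 * (k : ℝ[X]) * f := by
    have := deriv_pow_aux 1 (2 * k)
    rw [C_1] at this
    rw [hf, this]; push_cast; ring
  have hg1 : (X + 1) * derivative g = 2 * (m : ℝ[X]) * g := by
    have := deriv_pow_aux (-1) (2 * m)
    rw [C_neg, C_1, sub_neg_eq_add] at this
    rw [hg, this]; push_cast; ring
  have hf2 : (X - 1) * derivative (derivative f) = (2 * (k : ℝ[X]) - 1) * derivative f := by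
    have := congrArg derivative hf1
    simp [derivative_mul] at this
    linear_combination this
  have hg2 : (X + 1) * derivative (derivative g) = (2 * (m : ℝ[X]) - 1) * derivative g := by
    have := congrArg derivative hg1
    simp [derivative_mul] at this
    linear_combination this
  have hf3 : (X - 1) ^ 2 * derivative (derivative f)
      = (2 * (k : ℝ[X]) - 1) * (2 * (k : ℝ[X])) * f := by
    linear_combination (X - 1) * hf2 + (2 * (k : ℝ[X]) - 1) * hf1
  have hg3 : (X + 1) ^ 2 * derivative (derivative g)
      = (2 * (m : ℝ[X]) - 1) * (2 * (m : ℝ[X])) * g := by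
    linear_combination (X + 1) * hg2 + (2 * (m : ℝ[X]) - 1) * hg1
  have he : eB k m = f * g := by rw [hf, hg]; rfl
  have hd1 : (X ^ 2 - 1) * derivative (f * g)
      = (2 * (k : ℝ[X]) * (X + 1) + 2 * (m : ℝ[X]) * (X - 1)) * (f * g) := by
    rw [derivative_mul]
    linear_combination (X + 1) * g * hf1 + (X - 1) * f * hg1
  have hd2 : (X ^ 2 - 1) ^ 2 * derivative (derivative (f * g))
      = ((2 * (k : ℝ[X]) - 1) * (2 * (k : ℝ[X])) * (X + 1) ^ 2
          + 8 * (k : ℝ[X]) * (m : ℝ[X]) * (X ^ 2 - 1)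
          + (2 * (m : ℝ[X]) - 1) * (2 * (m : ℝ[X])) * (X - 1) ^ 2) * (f * g) := by
    simp only [derivative_mul, derivative_add]
    linear_combination (X + 1) ^ 2 * g * hf3 + (X - 1) ^ 2 * f * hg3
      + 2 * (X ^ 2 - 1) * ((X + 1) * derivative g) * hf1
      + 2 * (X ^ 2 - 1) * (2 * (k : ℝ[X]) * f) * hg1
  rw [he]
  unfold LOp
  simp only [C_add, C_sub, C_mul, C_1, Nat.cast_add, map_natCast, C_ofNat]
  linear_combination X * hd2 + (2 * ((k : ℝ[X]) + m) + C α + C β + 2 * (C α - C β) * X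
    - (2 * ((k : ℝ[X]) + m) - 2 - C α - C β) * X ^ 2) * hd1

open Polynomial in
theorem LOp_QP (α β : ℝ) (n : ℕ) : LOp α β n (QP α β n) = 0 := by
  have hne : (X ^ 2 - 1 : ℝ[X]) ≠ 0 := by
    intro h
    have := congrArg (eval 0) h
    simp at this
  apply (mul_eq_zero.mp _).resolve_left hne
  have hlin : LOp α β n (QP α β n)
      = ∑ k ∈ Finset.range (n + 1), C (aC α β n k) * LOp α β n (eB k (n - k)) := by
    unfold LOp QP
    simp only [derivative_sum, derivative_C_mul, Finset.mul_sum, ← Finset.sum_add_distrib,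
      ← Finset.sum_sub_distrib]
    apply Finset.sum_congr rfl
    intro k _
    ring
  rw [hlin, Finset.mul_sum]
  have h1 : ∀ k ∈ Finset.range (n + 1),
      (X ^ 2 - 1) * (C (aC α β n k) * LOp α β n (eB k (n - k)))
      = C (aC α β n k * (4 * k * (k + α))) * (eB k (n - k) * (X + 1) ^ 2)
        - C (aC α β n k * (4 * (n - k : ℕ) * ((n - k : ℕ) + β))) *
          (eB k (n - k) * (X - 1) ^ 2) := by
    intro k hk
    have hk' : k + (n - k) = n := by have := Finset.mem_range.mp hk; omega
    have := LOp_eB α β k (n - k)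
    rw [hk'] at this
    simp only [C_mul (a := aC α β n k)]
    linear_combination C (aC α β n k) * this
  rw [Finset.sum_congr rfl h1, Finset.sum_sub_distrib, sub_eq_zero, Finset.sum_range_succ',
    Finset.sum_range_succ]
  simp only [Nat.sub_self, Nat.cast_zero, mul_zero, zero_mul, C_0, add_zero]
  apply Finset.sum_congr rfl
  intro k hk
  obtain ⟨m, rfl⟩ : ∃ m, n = k + 1 + m :=
    ⟨n - (k + 1), by have := Finset.mem_range.mp hk; omega⟩
  have e1 : k + 1 + m - (k + 1) = m := by omega
  have e2 : k + 1 + m - k = m + 1 := by omega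
  rw [e1, e2]
  have hE : eB (k + 1) m * (X + 1) ^ 2 = eB k (m + 1) * (X - 1) ^ 2 := by
    unfold eB; ring
  rw [hE]
  congr 2
  have := aC_rec α β k m
  push_cast
  linear_combination 4 * this

open Polynomial in
theorem coeff_XD (P : ℝ[X]) (i : ℕ) : (X * derivative P).coeff i = i * P.coeff i := by
  rcases i with _ | i
  · simp
  · rw [coeff_X_mul, coeff_derivative]; push_cast; ring

open Polynomial in
theorem QP_rec1 (α β : ℝ) (n : ℕ) :
    (2 * n + α + β) * (QP α β n).coeff 1 = 2 * (α - β) * n * (QP α β n).coeff 0 := by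
  have h := congrArg (eval 0) (LOp_QP α β n)
  have h1 : (QP α β n).coeff 1 = eval 0 (derivative (QP α β n)) := by
    rw [← coeff_zero_eq_eval_zero, coeff_derivative]; simp
  rw [h1, coeff_zero_eq_eval_zero]
  simp [LOp] at h
  linear_combination h

open Polynomial in
theorem QP_rec (α β : ℝ) (n i : ℕ) :
    (i + 2) * (2 * n + α + β + 1 - 2 - i) * (QP α β n).coeff (i + 2)
      = 2 * (α - β) * (n - i - 1) * (QP α β n).coeff (i + 1)
        + (2 * n - i) * (i + (α + β + 1)) * (QP α β n).coeff i := by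
  have h := LOp_QP α β n
  generalize QP α β n = Q at *
  have e : LOp α β n Q = X * (X * derivative (X * derivative Q) - X * derivative Q)
      - X * derivative (derivative Q)
      + C (2 * n + α + β) * derivative Q + C (2 * (α - β)) * (X * derivative Q)
      - C (2 * n - 2 - α - β) * (X * (X * derivative Q))
      - C (2 * (α - β) * n) * Q - C (2 * n * (α + β + 1)) * (X * Q) := by
    unfold LOp
    simp only [derivative_mul, derivative_X]
    ring
  rw [e] at h
  have h2 := congrArg (fun p : ℝ[X] => p.coeff (i + 1)) h
  simp only [coeff_add, coeff_sub, coeff_C_mul, coeff_XD, coeff_X_mul, coeff_derivative,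
    coeff_zero] at h2
  push_cast at h2
  linear_combination h2

open Polynomial in
theorem QP_coeff_zero_pos (α β : ℝ) (hα : -1 < α) (hβ : -1 < β) (n : ℕ) :
    0 < (QP α β n).coeff 0 := by
  rw [coeff_zero_eq_eval_zero]
  unfold QP eB
  rw [eval_finsetSum]
  apply Finset.sum_pos _ ⟨0, by simp⟩
  intro k hk
  have := aC_pos α β hα hβ n k (by have := Finset.mem_range.mp hk; omega)
  simpa using this

open Polynomial in
theorem QP_coeff_pos_low (α β : ℝ) (hα : -1 < α) (hβ : -1 < β) (hab : β < α)
    (hsum : -1 ≤ α + β) (n : ℕ) :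
    ∀ j, j ≤ n → 0 < (QP α β n).coeff j := by
  intro j
  induction j using Nat.strong_induction_on with
  | _ j ih =>
    intro hj
    rcases j with _ | _ | i
    · exact QP_coeff_zero_pos α β hα hβ n
    · have h0 := ih 0 (by omega) (by omega)
      have hn : (1 : ℝ) ≤ n := by exact_mod_cast hj
      have h := QP_rec1 α β n
      have hr : 0 < 2 * (α - β) * n * (QP α β n).coeff 0 := by
        have : 0 < α - β := by linarith
        positivity
      rw [← h] at hr
      exact (pos_iff_pos_of_mul_pos hr).mp (by linarith)
    · have h0 := ih i (by omega) (by omega)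
      have h1 := ih (i + 1) (by omega) (by omega)
      have hn : (i : ℝ) + 2 ≤ n := by exact_mod_cast hj
      have hi : (0 : ℝ) ≤ i := by positivity
      have h := QP_rec α β n i
      have hr : 0 < 2 * (α - β) * (n - i - 1) * (QP α β n).coeff (i + 1)
        + (2 * n - i) * (i + (α + β + 1)) * (QP α β n).coeff i := by
        have a1 : 0 < α - β := by linarith
        have a2 : (0 : ℝ) < n - i - 1 := by linarith
        have a3 : (0 : ℝ) ≤ 2 * n - i := by linarith
        have a4 : 0 ≤ i + (α + β + 1) := by linarith
        positivity
      rw [← h] at hr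
      refine (pos_iff_pos_of_mul_pos hr).mp (mul_pos (by linarith) (by linarith))

open Polynomial in
theorem natDegree_eB (k m : ℕ) : (eB k m).natDegree ≤ 2 * (k + m) := by
  unfold eB
  compute_degree
  omega

open Polynomial in
theorem reflect_sq (c : ℝ) (hc : c = 1 ∨ c = -1) (k : ℕ) :
    reflect (2 * k) ((X + C c) ^ (2 * k)) = (X + C c) ^ (2 * k) := by
  induction k with
  | zero => simp [reflect_one]
  | succ k ih =>
    rw [show 2 * (k + 1) = 2 * k + 2 by ring, pow_add]
    rw [reflect_mul _ _ (by compute_degree) (by compute_degree), ih]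
    congr 1
    have hc2 : c ^ 2 = 1 := by rcases hc with rfl | rfl <;> norm_num
    have : (X + C c) ^ 2 = (C 1 * X ^ 2 + C (2 * c) * X ^ 1 + C 1 * X ^ 0 : ℝ[X]) := by
      have hc3 : (C c : ℝ[X]) ^ 2 = 1 := by rw [← C_pow, hc2, C_1]
      simp only [C_mul, C_ofNat, C_1]
      linear_combination hc3
    rw [this]
    simp only [reflect_add, reflect_C_mul_X_pow]
    rw [revAt_le (by norm_num), revAt_le (by norm_num), revAt_le (by norm_num)]
    norm_num
    ring

open Polynomial in
theorem coeff_eB_symm (k m j : ℕ) (hj : j ≤ 2 * (k + m)) :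
    (eB k m).coeff (2 * (k + m) - j) = (eB k m).coeff j := by
  have h : reflect (2 * (k + m)) (eB k m) = eB k m := by
    unfold eB
    rw [mul_add, reflect_mul _ _ (by compute_degree) (by compute_degree)]
    have h1 := reflect_sq (-1) (Or.inr rfl) k
    have h2 := reflect_sq 1 (Or.inl rfl) m
    rw [C_neg, C_1, ← sub_eq_add_neg] at h1
    rw [C_1] at h2
    rw [h1, h2]
  conv_rhs => rw [← h]
  rw [coeff_reflect, revAt_le hj]

open Polynomial in
theorem QP_symm (α β : ℝ) (n j : ℕ) (hj : j ≤ 2 * n) :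
    (QP α β n).coeff (2 * n - j) = (QP α β n).coeff j := by
  unfold QP
  simp only [finsetSum_coeff, coeff_C_mul]
  apply Finset.sum_congr rfl
  intro k hk
  have hk' : k + (n - k) = n := by have := Finset.mem_range.mp hk; omega
  have := coeff_eB_symm k (n - k) j (by rw [hk']; exact hj)
  rw [hk'] at this
  rw [this]

open Polynomial in
theorem QP_natDegree (α β : ℝ) (n : ℕ) : (QP α β n).natDegree < 2 * n + 1 := by
  apply Nat.lt_succ_of_le
  unfold QP
  apply natDegree_sum_le_of_forall_le
  intro k hk
  have hk' : k + (n - k) = n := by have := Finset.mem_range.mp hk; omega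
  refine (natDegree_C_mul_le _ _).trans ?_
  have := natDegree_eB k (n - k)
  rwa [hk'] at this

theorem QP_pos (α β : ℝ) (hα : -1 < α) (hβ : -1 < β) (hab : β < α)
    (hsum : -1 ≤ α + β) (n j : ℕ) (hj : j ≤ 2 * n) : 0 < (QP α β n).coeff j := by
  by_cases h : j ≤ n
  · exact QP_coeff_pos_low α β hα hβ hab hsum n j h
  · rw [← QP_symm α β n j hj]
    exact QP_coeff_pos_low α β hα hβ hab hsum n _ (by omega)

open Polynomial in
theorem aeval_QP (α β : ℝ) (n : ℕ) (u : ℂ) (hu : u ≠ 0) :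
    aeval u (QP α β n) = 4 ^ n * u ^ n * jacobiC α β n ((u + u⁻¹) / 2) := by
  unfold QP jacobiC eB
  rw [map_sum, Finset.mul_sum, Finset.mul_sum]
  apply Finset.sum_congr rfl
  intro k hk
  obtain ⟨m, rfl⟩ : ∃ m, n = k + m :=
    ⟨n - k, by have := Finset.mem_range.mp hk; omega⟩
  have e : k + m - k = m := by omega
  have h1 : (u + u⁻¹) / 2 - 1 = (u - 1) ^ 2 / (2 * u) := by field_simp; ring
  have h2 : (u + u⁻¹) / 2 + 1 = (u + 1) ^ 2 / (2 * u) := by field_simp; ring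
  rw [h1, h2, e]
  simp only [map_mul, aeval_C, map_pow, map_sub, map_add, aeval_X, map_one, aC, e,
    Complex.coe_algebraMap]
  have h4 : (4 : ℂ) = 2 * 2 := by norm_num
  rw [h4]
  simp only [div_pow, mul_pow, pow_add, pow_mul]
  field_simp
  push_cast
  ring

theorem jacobiC_ofReal (α β : ℝ) (n : ℕ) (x : ℝ) :
    jacobiC α β n (x : ℂ) = (jacobiP α β n x : ℂ) := by
  unfold jacobiC jacobiP
  push_cast
  rfl

theorem strict_aux (b0 b1 ρ : ℝ) (h0 : 0 < b0) (h1 : 0 < b1) (u : ℂ)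
    (hu : ‖u‖ = ρ) (h : b0 + b1 * ρ ≤ ‖(b0 : ℂ) + b1 * u‖) : u = (ρ : ℂ) := by
  have hρ : 0 ≤ ρ := hu ▸ norm_nonneg u
  have hsq : ρ ^ 2 = u.re ^ 2 + u.im ^ 2 := by
    rw [← hu, Complex.sq_norm, Complex.normSq_apply]; ring
  have h2 : (b0 + b1 * ρ) ^ 2 ≤ ‖(b0 : ℂ) + b1 * u‖ ^ 2 := by gcongr
  rw [Complex.sq_norm, Complex.normSq_apply] at h2
  simp at h2
  have h3 : 0 ≤ (b0 * b1) * (u.re - ρ) := by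
    have : b1 ^ 2 * ρ ^ 2 = b1 ^ 2 * (u.re ^ 2 + u.im ^ 2) := by rw [hsq]
    linarith
  have h4 : 0 ≤ u.re - ρ := nonneg_of_mul_nonneg_right h3 (mul_pos h0 h1)
  have h5 : u.im = 0 := by nlinarith [sq_nonneg u.im]
  have h6 : u.re = ρ := by
    have : u.re ≤ ‖u‖ := Complex.re_le_norm u
    linarith
  apply Complex.ext <;> simp [h5, h6]

open Polynomial in
theorem QP_main (α β : ℝ) (hα : -1 < α) (hβ : -1 < β) (hab : β < α)
    (hsum : -1 ≤ α + β) (n : ℕ) (hn : 1 ≤ n) (u : ℂ) (ρ : ℝ) (hu : ‖u‖ = ρ) :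
    ‖aeval u (QP α β n)‖ ≤ aeval ρ (QP α β n) ∧
    (aeval ρ (QP α β n) ≤ ‖aeval u (QP α β n)‖ → u = (ρ : ℂ)) := by
  obtain ⟨m, hm⟩ : ∃ m, 2 * n + 1 = m + 1 + 1 := ⟨2 * n - 1, by omega⟩
  have hd : (QP α β n).natDegree < m + 1 + 1 := hm ▸ QP_natDegree α β n
  have hp : ∀ j, j < m + 1 + 1 → 0 < (QP α β n).coeff j := fun j hj =>
    QP_pos α β hα hβ hab hsum n j (by omega)
  generalize QP α β n = Q at *
  have hρ : 0 ≤ ρ := hu ▸ norm_nonneg u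
  have e1 : aeval u Q = ∑ j ∈ Finset.range m, (Q.coeff (j + 1 + 1) : ℂ) * u ^ (j + 1 + 1)
      + ((Q.coeff 0 : ℂ) + Q.coeff 1 * u) := by
    rw [aeval_eq_sum_range' hd, Finset.sum_range_succ', Finset.sum_range_succ']
    simp only [Complex.real_smul]
    simp
    ring
  have e2 : aeval ρ Q = ∑ j ∈ Finset.range m, Q.coeff (j + 1 + 1) * ρ ^ (j + 1 + 1)
      + (Q.coeff 0 + Q.coeff 1 * ρ) := by
    rw [aeval_eq_sum_range' hd, Finset.sum_range_succ', Finset.sum_range_succ']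
    simp
    ring
  have h0 := hp 0 (by omega)
  have h1 := hp 1 (by omega)
  have b1 : ‖∑ j ∈ Finset.range m, (Q.coeff (j + 1 + 1) : ℂ) * u ^ (j + 1 + 1)‖
      ≤ ∑ j ∈ Finset.range m, Q.coeff (j + 1 + 1) * ρ ^ (j + 1 + 1) := by
    apply norm_sum_le_of_le
    intro j hj
    have := hp (j + 1 + 1) (by have := Finset.mem_range.mp hj; omega)
    rw [norm_mul, norm_pow, hu, Complex.norm_real, Real.norm_of_nonneg this.le]
  have b2 : ‖(Q.coeff 0 : ℂ) + Q.coeff 1 * u‖ ≤ Q.coeff 0 + Q.coeff 1 * ρ := by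
    refine (norm_add_le _ _).trans ?_
    rw [norm_mul, hu, Complex.norm_real, Complex.norm_real, Real.norm_of_nonneg h0.le,
      Real.norm_of_nonneg h1.le]
  have b3 : ‖aeval u Q‖ ≤ _ := e1 ▸ norm_add_le _ _
  refine ⟨by rw [e2]; linarith, fun h => ?_⟩
  rw [e2] at h
  exact strict_aux _ _ ρ h0 h1 u hu (by linarith)

/-- if `α > β` and `α + β ≥ -1`, then the maximum of `|P_n^{(α,β)}|` over the
Bernstein ellipse `E_ρ` is attained uniquely at the right endpoint `(ρ + ρ⁻¹)/2` of the
major axis. -/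
theorem jacobi_max_at_right_endpoint
    (α β : ℝ) (hα : -1 < α) (hβ : -1 < β) (hab : β < α) (hsum : -1 ≤ α + β)
    (ρ : ℝ) (hρ : 1 ≤ ρ) (n : ℕ) (hn : 1 ≤ n) :
    ∀ z ∈ bernsteinEllipse ρ,
      ‖jacobiC α β n z‖ ≤ jacobiP α β n ((ρ + ρ⁻¹) / 2) ∧
      (‖jacobiC α β n z‖ = jacobiP α β n ((ρ + ρ⁻¹) / 2) ↔
        z = (((ρ + ρ⁻¹) / 2 : ℝ) : ℂ)) := by
  rintro z ⟨u, hu, rfl⟩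
  have hρ0 : 0 < ρ := by linarith
  have hu0 : u ≠ 0 := by
    intro h
    rw [h, norm_zero] at hu
    linarith
  have hρc : (ρ : ℂ) ≠ 0 := by exact_mod_cast hρ0.ne'
  obtain ⟨h1, h2⟩ := QP_main α β hα hβ hab hsum n hn u ρ hu
  have hc : (((ρ + ρ⁻¹) / 2 : ℝ) : ℂ) = ((ρ : ℂ) + (ρ : ℂ)⁻¹) / 2 := by push_cast; rfl
  have e2 : Polynomial.aeval ρ (QP α β n)
      = 4 ^ n * ρ ^ n * jacobiP α β n ((ρ + ρ⁻¹) / 2) := by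
    have h := aeval_QP α β n (ρ : ℂ) hρc
    rw [← hc, jacobiC_ofReal] at h
    have h' : Polynomial.aeval (ρ : ℂ) (QP α β n)
        = ((Polynomial.aeval ρ (QP α β n) : ℝ) : ℂ) :=
      Polynomial.aeval_algebraMap_apply ℂ ρ (QP α β n)
    rw [h'] at h
    exact_mod_cast h
  have e1 : ‖Polynomial.aeval u (QP α β n)‖
      = 4 ^ n * ρ ^ n * ‖jacobiC α β n ((u + u⁻¹) / 2)‖ := by
    rw [aeval_QP α β n u hu0, norm_mul, norm_mul, norm_pow, norm_pow, hu]
    norm_num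
  have hpos : 0 < (4 : ℝ) ^ n * ρ ^ n := by positivity
  have hle : ‖jacobiC α β n ((u + u⁻¹) / 2)‖ ≤ jacobiP α β n ((ρ + ρ⁻¹) / 2) := by
    rw [e1, e2] at h1
    exact le_of_mul_le_mul_left h1 hpos
  refine ⟨hle, fun h => ?_, fun h => ?_⟩
  · rw [h2 (by rw [e1, e2, h]), hc]
  · have hnn := (norm_nonneg _).trans hle
    rw [h, jacobiC_ofReal, Complex.norm_real, Real.norm_of_nonneg hnn]
end
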